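/- Let 1 < α₀ < ϑ₀ < 2 and c₂ ≥ 1. There exists a constant C > 0, depending only on α₀, ϑ₀, c₂ and the constant K below, such that the following holds for every integer d ≥ 1, all α, ϑ ∈ [α₀, ϑ₀], every t ∈ (0,1], every real d×d matrix A with ‖Az‖ ≤ √c₂·‖z‖ for all z ∈ ℝ^d, and every twice continuously differentiable function f : ℝ^d → ℝ satisfying ‖∇f(x)‖ ≤ K and ‖∇²f(x)‖_op ≤ K·t^{−1/α} for all x ∈ ℝ^d: for every x ∈ ℝ^d, | ℒ^α_A f(x) − ℒ^ϑ_A f(x) | ≤ C·d·|ϑ−α|·t^{−1/α}. -/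

import Mathlib

open Real MeasureTheory

/-- The constant `c_{d,α} = α·2^(α−2)·Γ((d+α)/2) / (π^(d/2)·Γ((2−α)/2))`. -/
noncomputable def stableConst (d : ℕ) (α : ℝ) : ℝ :=
  α * (2 : ℝ) ^ (α - 2) * Real.Gamma ((d + α) / 2) /
    (Real.pi ^ ((d : ℝ) / 2) * Real.Gamma ((2 - α) / 2))

/-- The nonlocal operator
`ℒ^α_A f(x) = c_{d,α} ∫ (f(x+Az) − f(x) − ⟨∇f(x), Az⟩)·‖z‖^{−(d+α)} dz`
(the integrand vanishes at `z = 0` since `‖0‖^{−(d+α)} = 0` for `rpow`). -/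
noncomputable def nonlocalOp (d : ℕ) (α : ℝ) (A : Matrix (Fin d) (Fin d) ℝ)
    (f : EuclideanSpace ℝ (Fin d) → ℝ) (x : EuclideanSpace ℝ (Fin d)) : ℝ :=
  stableConst d α * ∫ z : EuclideanSpace ℝ (Fin d),
    (f (x + Matrix.toEuclideanLin A z) - f x - fderiv ℝ f x (Matrix.toEuclideanLin A z))
      * ‖z‖ ^ (-((d : ℝ) + α))

/-
With `S_d` the area of the unit sphere, `c_{d,s}·S_d` is the product of `s·2^{s-1}/Γ((2-s)/2)`,
which is `C¹` because `1/Γ` is entire, and of `Γ((d+s)/2)/Γ(d/2)`. The latter is convex in `s`,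
equals `1` at `s = 0` and `d/2` at `s = 2`, and is therefore at most `d` and `O(d)`-Lipschitz away
from these endpoints.

The first-order Taylor remainder of `f` is both `O(‖z‖)` and `O(‖z‖²)`, and `‖z‖^{-(d+s)}` is
monotone in `s` inside the unit ball and antitone outside. The difference of the two integrals is
thus controlled by the differences of the radial moments `S_d/(2-s)` of `‖z‖²` inside the ball and
`S_d/(s-1)` of `‖z‖` outside, which are Lipschitz in `s`. Dividing the integrals by `S_d`, the
operator becomes a product of two bounded Lipschitz functions of `s`, of which only `c_{d,s}·S_d`
grows with the dimension, linearly.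
-/

section Constants

open Set Metric

theorem abs_mul_sub_mul_le {a a' b b' A A' B B' δ : ℝ} (ha' : |a'| ≤ A) (hb : |b| ≤ B)
    (haa' : |a - a'| ≤ A' * δ) (hbb' : |b - b'| ≤ B' * δ) :
    |a * b - a' * b'| ≤ (A' * B + A * B') * δ :=
  calc |a * b - a' * b'| = |(a - a') * b + a' * (b - b')| := by ring_nf
    _ ≤ |a - a'| * |b| + |a'| * |b - b'| := by
      simpa only [abs_mul] using abs_add_le ((a - a') * b) (a' * (b - b'))
    _ ≤ A' * δ * B + A * (B' * δ) := by
      gcongr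
      · exact (abs_nonneg _).trans haa'
      · exact (abs_nonneg _).trans ha'
    _ = (A' * B + A * B') * δ := by ring

/-- The Gamma quotient `Γ(x+s)/Γ(x)`, the rising factorial of `x` with a real number `s` of
factors. -/
noncomputable def gammaRatio (x s : ℝ) : ℝ :=
  Gamma (x + s) / Gamma x

theorem gammaRatio_zero {x : ℝ} (hx : 0 < x) : gammaRatio x 0 = 1 := by
  rw [gammaRatio, add_zero, div_self (Gamma_pos_of_pos hx).ne']

theorem gammaRatio_one {x : ℝ} (hx : 0 < x) : gammaRatio x 1 = x := by
  rw [gammaRatio, Gamma_add_one hx.ne', mul_div_cancel_right₀ _ (Gamma_pos_of_pos hx).ne']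

theorem gammaRatio_nonneg {x s : ℝ} (hx : 0 ≤ x) (hs : 0 ≤ s) : 0 ≤ gammaRatio x s :=
  div_nonneg (Gamma_nonneg_of_nonneg (add_nonneg hx hs)) (Gamma_nonneg_of_nonneg hx)

theorem convexOn_gammaRatio {x : ℝ} (hx : 0 < x) : ConvexOn ℝ (Ioi (-x)) (gammaRatio x) := by
  have hΓ : ConvexOn ℝ (Ioi (-x)) fun s => Gamma (x + s) := by
    simpa [Function.comp_def] using convexOn_Gamma.translate_right x
  change ConvexOn ℝ _ fun s => Gamma (x + s) / Gamma x
  simpa only [smul_eq_mul, div_eq_inv_mul] using hΓ.smul (inv_nonneg.2 (Gamma_pos_of_pos hx).le)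

theorem gammaRatio_le_max {x s : ℝ} (hx : 0 < x) (hs : s ∈ Icc 0 1) :
    gammaRatio x s ≤ max 1 x := by
  simpa only [gammaRatio_zero hx, gammaRatio_one hx] using
    (convexOn_gammaRatio hx).le_max_of_mem_Icc (neg_lt_zero.2 hx)
      (show -x < 1 by linarith) hs

theorem abs_gammaRatio_le {x s : ℝ} (hx : 0 < x) (hs : s ∈ Icc 0 1) :
    |gammaRatio x s| ≤ max 1 x :=
  (abs_of_nonneg (gammaRatio_nonneg hx.le hs.1)).trans_le (gammaRatio_le_max hx hs)

theorem abs_gammaRatio_sub_le {x ε s t : ℝ} (hx : 0 < x) (hε : 0 < ε)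
    (hs : s ∈ Ioo ε (1 - ε)) (ht : t ∈ Ioo ε (1 - ε)) :
    |gammaRatio x s - gammaRatio x t| ≤ 2 * max 1 x / ε * |s - t| := by
  have hunit : ball (1 / 2 : ℝ) (1 / 2) = Ioo 0 1 := by norm_num [ball_eq_Ioo]
  have hsub : ball (1 / 2 : ℝ) (1 / 2 - ε) = Ioo ε (1 - ε) := by
    rw [ball_eq_Ioo]; congr 1 <;> ring
  have hconv : ConvexOn ℝ (ball (1 / 2) (1 / 2)) (gammaRatio x) :=
    (convexOn_gammaRatio hx).subset
      (hunit ▸ fun r hr => (neg_lt_zero.2 hx).trans hr.1) (convex_ball _ _)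
  have hlip := hconv.lipschitzOnWith_of_abs_le hε (M := max 1 x) fun r hr =>
    abs_gammaRatio_le hx (Ioo_subset_Icc_self (hunit ▸ mem_ball.2 hr))
  simpa only [dist_eq, coe_toNNReal _ (show 0 ≤ 2 * max 1 x / ε by positivity)] using
    hlip.dist_le_mul s (hsub ▸ hs) t (hsub ▸ ht)

theorem abs_gammaRatio_half_le {x s : ℝ} (hx : 1 ≤ x) (hs : s ∈ Icc 0 1) :
    |gammaRatio (x / 2) s| ≤ x :=
  (abs_gammaRatio_le (by linarith) hs).trans (max_le hx (by linarith))

theorem abs_gammaRatio_half_sub_le {x ε s t : ℝ} (hx : 1 ≤ x) (hε : 0 < ε)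
    (hs : s ∈ Ioo ε (1 - ε)) (ht : t ∈ Ioo ε (1 - ε)) :
    |gammaRatio (x / 2) s - gammaRatio (x / 2) t| ≤ 2 * x / ε * |s - t| :=
  (abs_gammaRatio_sub_le (by linarith) hε hs ht).trans <| by
    gcongr
    exact max_le hx (by linarith)

theorem contDiff_inv_Gamma {n : WithTop ℕ∞} : ContDiff ℝ n fun s : ℝ => (Gamma s)⁻¹ := by
  have hcomplex : ContDiff ℂ n fun s : ℂ => (Complex.Gamma s)⁻¹ :=
    Complex.differentiable_one_div_Gamma.contDiff
  simpa only [Complex.Gamma_ofReal, ← Complex.ofReal_inv, Complex.ofReal_re] using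
    hcomplex.real_of_complex

/-- The factor of `c_{d,s}·S_d` that does not depend on the dimension `d`. -/
noncomputable def stableFactor (s : ℝ) : ℝ :=
  s * 2 ^ (s - 1) * (Gamma ((2 - s) / 2))⁻¹

theorem contDiff_stableFactor {n : WithTop ℕ∞} : ContDiff ℝ n stableFactor := by
  have hpow : ContDiff ℝ n fun s : ℝ => (2 : ℝ) ^ (s - 1) :=
    contDiff_const.rpow (contDiff_id.sub contDiff_const) fun _ => two_ne_zero
  exact (contDiff_id.mul hpow).mul
    (contDiff_inv_Gamma.comp ((contDiff_const.sub contDiff_id).div_const 2))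

/-- The surface area `S_d` of the unit sphere of `ℝ^d`. -/
noncomputable def sphereArea (d : ℕ) : ℝ :=
  2 * π ^ ((d : ℝ) / 2) / Gamma (d / 2)

theorem sphereArea_pos {d : ℕ} (hd : 1 ≤ d) : 0 < sphereArea d := by
  have := Gamma_pos_of_pos (half_pos (Nat.cast_pos'.2 hd : (0 : ℝ) < d))
  unfold sphereArea
  positivity

theorem toSphere_real_univ_eq_sphereArea {d : ℕ} (hd : 1 ≤ d) :
    (volume : Measure (EuclideanSpace ℝ (Fin d))).toSphere.real univ = sphereArea d := by
  have : Nonempty (Fin d) := ⟨⟨0, hd⟩⟩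
  have hd' : (0 : ℝ) < d / 2 := half_pos (Nat.cast_pos'.2 hd)
  have hπ : √π ^ d = π ^ ((d : ℝ) / 2) := by
    rw [sqrt_eq_rpow, ← rpow_mul_natCast pi_pos.le, one_div_mul_eq_div]
  have := Gamma_pos_of_pos hd'
  rw [Measure.toSphere_real_apply_univ, finrank_euclideanSpace_fin, Measure.real,
    EuclideanSpace.volume_ball, Fintype.card_fin, hπ, Gamma_add_one hd'.ne', sphereArea,
    ENNReal.ofReal_one, one_pow, one_mul, ENNReal.toReal_ofReal (by positivity)]
  field_simp

theorem stableConst_mul_sphereArea {d : ℕ} (hd : 1 ≤ d) (s : ℝ) :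
    stableConst d s * sphereArea d = stableFactor s * gammaRatio (d / 2) (s / 2) := by
  have := Gamma_pos_of_pos (half_pos (Nat.cast_pos'.2 hd : (0 : ℝ) < d))
  have h2 : (2 : ℝ) ^ (s - 1) = 2 ^ (s - 2) * 2 := by
    rw [← rpow_add_one two_ne_zero]; ring_nf
  rw [stableConst, sphereArea, stableFactor, gammaRatio, h2, add_div]
  field_simp

theorem exists_abs_le_and_abs_sub_le_of_contDiff {f : ℝ → ℝ} (hf : ContDiff ℝ 1 f) (a b : ℝ) :
    ∃ M > 0, ∀ s ∈ Icc a b, |f s| ≤ M ∧ ∀ r ∈ Icc a b, |f s - f r| ≤ M * |s - r| := by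
  obtain ⟨B, hB⟩ := isCompact_Icc.exists_bound_of_continuousOn
    (hf.continuous.continuousOn (s := Icc a b))
  obtain ⟨L, hL⟩ := hf.contDiffOn.exists_lipschitzOnWith one_ne_zero (convex_Icc a b) isCompact_Icc
  refine ⟨max 1 (max B L), by positivity, fun s hs => ⟨?_, fun r hr => ?_⟩⟩
  · exact (hB s hs).trans ((le_max_left _ _).trans (le_max_right _ _))
  · refine (hL.dist_le_mul s hs r hr).trans ?_
    rw [dist_eq]
    gcongr
    exact (le_max_right _ _).trans (le_max_right _ _)

theorem exists_stableConst_mul_sphereArea_bounds {a b : ℝ} (ha : 0 < a) (hb : b < 2) :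
    ∃ L > 0, ∀ d : ℕ, 1 ≤ d → ∀ s ∈ Icc a b,
      |stableConst d s * sphereArea d| ≤ L * d ∧ ∀ r ∈ Icc a b,
        |stableConst d s * sphereArea d - stableConst d r * sphereArea d| ≤ L * d * |s - r| := by
  obtain ⟨M, hM0, hM⟩ :=
    exists_abs_le_and_abs_sub_le_of_contDiff (contDiff_stableFactor (n := 1)) a b
  obtain ⟨ε, hε, hεa, hεb⟩ : ∃ ε > 0, ε < a / 2 ∧ b / 2 < 1 - ε :=
    ⟨min a (2 - b) / 4, by positivity [sub_pos.2 hb], by linarith [min_le_left a (2 - b)],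
      by linarith [min_le_right a (2 - b)]⟩
  refine ⟨M + M / ε, by positivity, fun d hd s hs => ?_⟩
  have hd1 : (1 : ℝ) ≤ d := Nat.one_le_cast.2 hd
  have hhalf {r : ℝ} (hr : r ∈ Icc a b) : r / 2 ∈ Ioo ε (1 - ε) :=
    ⟨by linarith [hr.1], by linarith [hr.2]⟩
  have hρ : |gammaRatio (d / 2) (s / 2)| ≤ d :=
    abs_gammaRatio_half_le hd1 ⟨by linarith [hs.1], by linarith [hs.2]⟩
  rw [stableConst_mul_sphereArea hd]
  refine ⟨?_, fun r hr => ?_⟩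
  · calc _ = |stableFactor s| * |gammaRatio (d / 2) (s / 2)| := abs_mul _ _
      _ ≤ M * d := by gcongr; exact (hM s hs).1
      _ ≤ (M + M / ε) * d := by gcongr; exact le_add_of_nonneg_right (by positivity)
  · have hρsub : |gammaRatio (d / 2) (s / 2) - gammaRatio (d / 2) (r / 2)| ≤ d / ε * |s - r| :=
      calc _ ≤ 2 * d / ε * |s / 2 - r / 2| :=
            abs_gammaRatio_half_sub_le hd1 hε (hhalf hs) (hhalf hr)
        _ = d / ε * |s - r| := by rw [← sub_div, abs_div, abs_two]; ring
    rw [stableConst_mul_sphereArea hd]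
    calc _ ≤ (M * d + M * (d / ε)) * |s - r| :=
          abs_mul_sub_mul_le (hM r hr).1 hρ ((hM s hs).2 r hr) hρsub
      _ = (M + M / ε) * d * |s - r| := by ring

end Constants

section Comparison

variable {Ω : Type*} [MeasurableSpace Ω] {μ : Measure Ω} {g h u v : Ω → ℝ} {B : ℝ}

theorem abs_integral_mul_le (hgh : ∀ᵐ z ∂μ, |g z| ≤ B * h z) (hu : 0 ≤ᵐ[μ] u)
    (hhu : Integrable (fun z => h z * u z) μ) :
    |∫ z, g z * u z ∂μ| ≤ B * ∫ z, h z * u z ∂μ := by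
  rw [← integral_const_mul]
  refine norm_integral_le_of_norm_le (f := fun z => g z * u z) (hhu.const_mul B) ?_
  filter_upwards [hgh, hu] with z hz huz
  simpa only [norm_mul, norm_eq_abs, abs_of_nonneg huz, mul_assoc] using
    mul_le_mul_of_nonneg_right hz huz

theorem integrable_mul_of_abs_le (hg : AEStronglyMeasurable g μ) (hu : AEStronglyMeasurable u μ)
    (hgh : ∀ᵐ z ∂μ, |g z| ≤ B * h z) (hhu : Integrable (fun z => h z * u z) μ) :
    Integrable (fun z => g z * u z) μ := by
  refine (hhu.const_mul B).mono (hg.mul hu) ?_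
  filter_upwards [hgh] with z hz
  simpa only [norm_mul, norm_eq_abs, abs_mul, mul_assoc] using
    mul_le_mul_of_nonneg_right (hz.trans (le_abs_self _)) (abs_nonneg (u z))

theorem abs_integral_mul_sub_integral_mul_le (hgh : ∀ᵐ z ∂μ, |g z| ≤ B * h z) (huv : u ≤ᵐ[μ] v)
    (hgu : Integrable (fun z => g z * u z) μ) (hgv : Integrable (fun z => g z * v z) μ)
    (hhu : Integrable (fun z => h z * u z) μ) (hhv : Integrable (fun z => h z * v z) μ) :
    |(∫ z, g z * u z ∂μ) - ∫ z, g z * v z ∂μ| ≤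
      B * ((∫ z, h z * v z ∂μ) - ∫ z, h z * u z ∂μ) := by
  have hsub : 0 ≤ᵐ[μ] v - u := huv.mono fun z hz => sub_nonneg.2 hz
  have hhsub : Integrable (fun z => h z * (v - u) z) μ :=
    (hhv.sub hhu).congr (ae_of_all μ fun z => (mul_sub (h z) (v z) (u z)).symm)
  rw [abs_sub_comm, ← integral_sub hgv hgu, ← integral_sub hhv hhu]
  simpa only [Pi.sub_apply, mul_sub] using abs_integral_mul_le hgh hsub hhsub

theorem setIntegral_preimage_Iic_add_preimage_Ioi {φ f : Ω → ℝ} (hφ : Measurable φ)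
    (hf : Integrable f μ) (R : ℝ) :
    ∫ z in φ ⁻¹' Set.Iic R, f z ∂μ + ∫ z in φ ⁻¹' Set.Ioi R, f z ∂μ = ∫ z, f z ∂μ := by
  rw [← Set.compl_Iic, Set.preimage_compl]
  exact integral_add_compl (hφ measurableSet_Iic) hf

end Comparison

section Radial

open Set Metric Module

variable {E : Type*} [NormedAddCommGroup E] [NormedSpace ℝ E]

/-- The Lebesgue density `‖z‖^{-(dim E + s)}` of the isotropic `s`-stable Lévy measure, without its
normalising constant. -/
noncomputable def stableKernel (s : ℝ) (z : E) : ℝ :=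
  ‖z‖ ^ (-((finrank ℝ E : ℝ) + s))

theorem stableKernel_nonneg (s : ℝ) (z : E) : 0 ≤ stableKernel s z :=
  rpow_nonneg (norm_nonneg z) _

theorem stableKernel_le_of_norm_le_one {α ϑ : ℝ} (hα : 0 < α) (hαϑ : α ≤ ϑ) {z : E}
    (hz : ‖z‖ ≤ 1) : stableKernel α z ≤ stableKernel ϑ z := by
  unfold stableKernel
  rcases (norm_nonneg z).eq_or_lt with hz0 | hz0
  · have : (0 : ℝ) ≤ finrank ℝ E := Nat.cast_nonneg _
    rw [← hz0, zero_rpow (by linarith), zero_rpow (by linarith)]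
  · exact rpow_le_rpow_of_exponent_ge hz0 hz (by linarith)

theorem stableKernel_le_of_one_le_norm {α ϑ : ℝ} (hαϑ : α ≤ ϑ) {z : E} (hz : 1 ≤ ‖z‖) :
    stableKernel ϑ z ≤ stableKernel α z :=
  rpow_le_rpow_of_exponent_le hz (by linarith)

variable [MeasurableSpace E] [BorelSpace E]

theorem measurable_stableKernel (s : ℝ) : Measurable (stableKernel s : E → ℝ) :=
  measurable_norm.pow_const _

variable [FiniteDimensional ℝ E] [Nontrivial E] {μ : Measure E} [μ.IsAddHaarMeasure]

section PolarCoordinates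

variable {G : Type*} [NormedAddCommGroup G] [NormedSpace ℝ G] {F : ℝ → G} {T : Set ℝ}

theorem integrableOn_preimage_norm_iff (hT : MeasurableSet T) :
    IntegrableOn (fun z : E => F ‖z‖) (norm ⁻¹' T) μ ↔
      IntegrableOn (fun r => r ^ (finrank ℝ E - 1) • F r) (T ∩ Ioi 0) := by
  rw [← integrable_indicator_iff (measurable_norm hT)]
  change Integrable (fun z : E => T.indicator F ‖z‖) μ ↔ _
  rw [integrable_fun_norm_addHaar, ← integrableOn_indicator_iff hT, indicator_smul]

theorem setIntegral_preimage_norm (hT : MeasurableSet T) :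
    ∫ z : E in norm ⁻¹' T, F ‖z‖ ∂μ =
      μ.toSphere.real univ • ∫ r in T ∩ Ioi 0, r ^ (finrank ℝ E - 1) • F r := by
  rw [← integral_indicator (measurable_norm hT)]
  change ∫ z : E, T.indicator F ‖z‖ ∂μ = _
  rw [integral_fun_norm_addHaar, μ.toSphere_real_apply_univ, ← nsmul_eq_mul, smul_assoc,
    inter_comm, ← setIntegral_indicator hT, indicator_smul]

end PolarCoordinates

theorem pow_sub_one_smul_pow_mul_rpow {n k : ℕ} (hn : 1 ≤ n) (s : ℝ) {r : ℝ} (hr : 0 < r) :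
    r ^ (n - 1) • (r ^ k * r ^ (-((n : ℝ) + s))) = r ^ ((k : ℝ) - s - 1) := by
  rw [smul_eq_mul, ← rpow_natCast, ← rpow_natCast, ← rpow_add hr, ← rpow_add hr, Nat.cast_sub hn]
  push_cast
  ring_nf

theorem integrableOn_Iic_norm_pow_mul_stableKernel {k : ℕ} {s : ℝ} (hs : s < k) (R : ℝ) :
    IntegrableOn (fun z : E => ‖z‖ ^ k * stableKernel s z) (norm ⁻¹' Iic R) μ := by
  unfold stableKernel
  rw [integrableOn_preimage_norm_iff (F := fun r => r ^ k * r ^ _) measurableSet_Iic,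
    integrableOn_congr_fun (fun r hr => pow_sub_one_smul_pow_mul_rpow finrank_pos s hr.2)
      (measurableSet_Iic.inter measurableSet_Ioi), inter_comm, Ioi_inter_Iic]
  rcases le_total 0 R with hR | hR
  · exact (intervalIntegrable_iff_integrableOn_Ioc_of_le hR).1
      (intervalIntegral.intervalIntegrable_rpow' (by linarith))
  · rw [Ioc_eq_empty_of_le hR]
    exact integrableOn_empty

theorem setIntegral_Iic_norm_pow_mul_stableKernel {k : ℕ} {s R : ℝ} (hs : s < k) (hR : 0 ≤ R) :
    ∫ z : E in norm ⁻¹' Iic R, ‖z‖ ^ k * stableKernel s z ∂μ =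
      μ.toSphere.real univ * (R ^ (k - s) / (k - s)) := by
  unfold stableKernel
  rw [setIntegral_preimage_norm (F := fun r => r ^ k * r ^ _) measurableSet_Iic,
    setIntegral_congr_fun (measurableSet_Iic.inter measurableSet_Ioi)
      (fun r hr => pow_sub_one_smul_pow_mul_rpow finrank_pos s hr.2), inter_comm, Ioi_inter_Iic,
    ← intervalIntegral.integral_of_le hR, integral_rpow (Or.inl (by linarith)), sub_add_cancel,
    zero_rpow (by linarith), sub_zero, smul_eq_mul]

theorem integrableOn_Ioi_norm_pow_mul_stableKernel {k : ℕ} {s R : ℝ} (hs : k < s) (hR : 0 < R) :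
    IntegrableOn (fun z : E => ‖z‖ ^ k * stableKernel s z) (norm ⁻¹' Ioi R) μ := by
  unfold stableKernel
  rw [integrableOn_preimage_norm_iff (F := fun r => r ^ k * r ^ _) measurableSet_Ioi,
    integrableOn_congr_fun (fun r hr => pow_sub_one_smul_pow_mul_rpow finrank_pos s hr.2)
      (measurableSet_Ioi.inter measurableSet_Ioi),
    inter_eq_self_of_subset_left (Ioi_subset_Ioi hR.le)]
  exact integrableOn_Ioi_rpow_of_lt (by linarith) hR

theorem setIntegral_Ioi_norm_pow_mul_stableKernel {k : ℕ} {s R : ℝ} (hs : k < s) (hR : 0 < R) :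
    ∫ z : E in norm ⁻¹' Ioi R, ‖z‖ ^ k * stableKernel s z ∂μ =
      μ.toSphere.real univ * (R ^ (k - s) / (s - k)) := by
  unfold stableKernel
  rw [setIntegral_preimage_norm (F := fun r => r ^ k * r ^ _) measurableSet_Ioi,
    setIntegral_congr_fun (measurableSet_Ioi.inter measurableSet_Ioi)
      (fun r hr => pow_sub_one_smul_pow_mul_rpow finrank_pos s hr.2),
    inter_eq_self_of_subset_left (Ioi_subset_Ioi hR.le),
    integral_Ioi_rpow_of_lt (by linarith) hR, sub_add_cancel, ← neg_sub s, neg_div_neg_eq,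
    smul_eq_mul]

variable {g : E → ℝ} {B B' : ℝ} {j k : ℕ}

theorem integrable_mul_stableKernel (hg : AEStronglyMeasurable g μ)
    (hj : ∀ z, |g z| ≤ B * ‖z‖ ^ j) (hk : ∀ z, |g z| ≤ B' * ‖z‖ ^ k) {s : ℝ}
    (hjs : j < s) (hsk : s < k) : Integrable (fun z => g z * stableKernel s z) μ := by
  have hkernel := (measurable_stableKernel (E := E) s).aestronglyMeasurable (μ := μ)
  have hcover : (norm ⁻¹' Iic 1 ∪ norm ⁻¹' Ioi 1 : Set E) = univ := by
    rw [← preimage_union, Iic_union_Ioi, preimage_univ]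
  rw [← integrableOn_univ, ← hcover]
  exact IntegrableOn.union
    (integrable_mul_of_abs_le hg.restrict hkernel.restrict (ae_of_all _ hk)
      (integrableOn_Iic_norm_pow_mul_stableKernel hsk 1))
    (integrable_mul_of_abs_le hg.restrict hkernel.restrict (ae_of_all _ hj)
      (integrableOn_Ioi_norm_pow_mul_stableKernel hjs one_pos))

theorem abs_integral_mul_stableKernel_le (hg : AEStronglyMeasurable g μ)
    (hj : ∀ z, |g z| ≤ B * ‖z‖ ^ j) (hk : ∀ z, |g z| ≤ B' * ‖z‖ ^ k) {s : ℝ}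
    (hjs : j < s) (hsk : s < k) :
    |∫ z, g z * stableKernel s z ∂μ| ≤
      μ.toSphere.real univ * (B / (s - j) + B' / (k - s)) := by
  have hnear := abs_integral_mul_le (ae_of_all _ hk) (ae_of_all _ (stableKernel_nonneg s))
    (integrableOn_Iic_norm_pow_mul_stableKernel (μ := μ) hsk 1)
  have hfar := abs_integral_mul_le (ae_of_all _ hj) (ae_of_all _ (stableKernel_nonneg s))
    (integrableOn_Ioi_norm_pow_mul_stableKernel (μ := μ) hjs one_pos)
  rw [setIntegral_Iic_norm_pow_mul_stableKernel hsk zero_le_one, one_rpow] at hnear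
  rw [setIntegral_Ioi_norm_pow_mul_stableKernel hjs one_pos, one_rpow] at hfar
  rw [← setIntegral_preimage_Iic_add_preimage_Ioi measurable_norm
    (integrable_mul_stableKernel hg hj hk hjs hsk) 1]
  refine (abs_add_le _ _).trans ((add_le_add hnear hfar).trans_eq ?_)
  ring

theorem abs_integral_mul_stableKernel_sub_le (hg : AEStronglyMeasurable g μ)
    (hj : ∀ z, |g z| ≤ B * ‖z‖ ^ j) (hk : ∀ z, |g z| ≤ B' * ‖z‖ ^ k) {α ϑ : ℝ}
    (hjα : j < α) (hαϑ : α ≤ ϑ) (hϑk : ϑ < k) :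
    |(∫ z, g z * stableKernel α z ∂μ) - ∫ z, g z * stableKernel ϑ z ∂μ| ≤
      μ.toSphere.real univ * (B * ((α - j)⁻¹ - (ϑ - j)⁻¹) + B' * ((k - ϑ)⁻¹ - (k - α)⁻¹)) := by
  have hα0 : 0 < α := (Nat.cast_nonneg j).trans_lt hjα
  have hjϑ : j < ϑ := hjα.trans_le hαϑ
  have hαk : α < k := hαϑ.trans_lt hϑk
  have hgα := integrable_mul_stableKernel hg hj hk hjα hαk
  have hgϑ := integrable_mul_stableKernel hg hj hk hjϑ hϑk
  have hnear := abs_integral_mul_sub_integral_mul_le (ae_of_all _ hk)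
    (ae_restrict_of_forall_mem (measurable_norm measurableSet_Iic) fun z hz =>
      stableKernel_le_of_norm_le_one hα0 hαϑ hz)
    hgα.integrableOn hgϑ.integrableOn
    (integrableOn_Iic_norm_pow_mul_stableKernel (μ := μ) hαk 1)
    (integrableOn_Iic_norm_pow_mul_stableKernel hϑk 1)
  have hfar := abs_integral_mul_sub_integral_mul_le (ae_of_all _ hj)
    (ae_restrict_of_forall_mem (measurable_norm measurableSet_Ioi) fun z (hz : 1 < ‖z‖) =>
      stableKernel_le_of_one_le_norm hαϑ hz.le)
    hgϑ.integrableOn hgα.integrableOn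
    (integrableOn_Ioi_norm_pow_mul_stableKernel (μ := μ) hjϑ one_pos)
    (integrableOn_Ioi_norm_pow_mul_stableKernel hjα one_pos)
  simp only [setIntegral_Iic_norm_pow_mul_stableKernel hαk zero_le_one,
    setIntegral_Iic_norm_pow_mul_stableKernel hϑk zero_le_one, one_rpow] at hnear
  simp only [setIntegral_Ioi_norm_pow_mul_stableKernel hjα one_pos,
    setIntegral_Ioi_norm_pow_mul_stableKernel hjϑ one_pos, one_rpow] at hfar
  rw [abs_sub_comm] at hfar
  rw [← setIntegral_preimage_Iic_add_preimage_Ioi measurable_norm hgα 1,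
    ← setIntegral_preimage_Iic_add_preimage_Ioi measurable_norm hgϑ 1, add_sub_add_comm]
  refine (abs_add_le _ _).trans ((add_le_add hnear hfar).trans_eq ?_)
  ring

theorem inv_sub_inv_le_div_sq {c x y : ℝ} (hc : 0 < c) (hcx : c ≤ x) (hxy : x ≤ y) :
    x⁻¹ - y⁻¹ ≤ (y - x) / c ^ 2 := by
  have hx : 0 < x := hc.trans_le hcx
  have hcy : c ≤ y := hcx.trans hxy
  rw [inv_sub_inv hx.ne' (hx.trans_le hxy).ne', sq]
  gcongr

theorem abs_integral_mul_stableKernel_sub_le_of_mem_Icc (hg : AEStronglyMeasurable g μ)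
    (hB : 0 ≤ B) (hB' : 0 ≤ B') (hj : ∀ z, |g z| ≤ B * ‖z‖ ^ j) (hk : ∀ z, |g z| ≤ B' * ‖z‖ ^ k)
    {a b α ϑ : ℝ} (ha : j < a) (hb : b < k) (hα : α ∈ Icc a b) (hϑ : ϑ ∈ Icc a b) :
    |(∫ z, g z * stableKernel α z ∂μ) - ∫ z, g z * stableKernel ϑ z ∂μ| ≤
      μ.toSphere.real univ * (B / (a - j) ^ 2 + B' / (k - b) ^ 2) * |α - ϑ| := by
  wlog hαϑ : α ≤ ϑ generalizing α ϑ
  · rw [abs_sub_comm, abs_sub_comm α]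
    exact this hϑ hα (le_of_not_ge hαϑ)
  have hfar : (α - j)⁻¹ - (ϑ - j)⁻¹ ≤ (ϑ - α) / (a - j) ^ 2 := by
    simpa only [sub_sub_sub_cancel_right] using inv_sub_inv_le_div_sq (sub_pos.2 ha)
      (sub_le_sub_right hα.1 _) (sub_le_sub_right hαϑ _)
  have hnear : (k - ϑ)⁻¹ - (k - α)⁻¹ ≤ (ϑ - α) / (k - b) ^ 2 := by
    simpa only [sub_sub_sub_cancel_left] using inv_sub_inv_le_div_sq (sub_pos.2 hb)
      (sub_le_sub_left hϑ.2 _) (sub_le_sub_left hαϑ _)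
  calc _ ≤ _ := abs_integral_mul_stableKernel_sub_le hg hj hk (ha.trans_le hα.1) hαϑ
        (hϑ.2.trans_lt hb)
    _ ≤ μ.toSphere.real univ * (B * ((ϑ - α) / (a - j) ^ 2) + B' * ((ϑ - α) / (k - b) ^ 2)) := by
      gcongr
    _ = μ.toSphere.real univ * (B / (a - j) ^ 2 + B' / (k - b) ^ 2) * |α - ϑ| := by
      rw [abs_sub_comm, abs_of_nonneg (sub_nonneg.2 hαϑ)]
      ring

end Radial

section Taylor

variable {E F : Type*} [NormedAddCommGroup E] [NormedSpace ℝ E]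
  [NormedAddCommGroup F] [NormedSpace ℝ F] {f : E → F}

/-- The first-order Taylor remainder `f(x+h) − f(x) − Df(x)h`, the integrand of the nonlocal
operator before weighting. -/
noncomputable def taylorRemainder (f : E → F) (x h : E) : F :=
  f (x + h) - f x - fderiv ℝ f x h

theorem continuous_taylorRemainder (hf : Continuous f) (x : E) :
    Continuous (taylorRemainder f x) := by
  unfold taylorRemainder
  fun_prop

theorem norm_taylorRemainder_le (hf : Differentiable ℝ f) {K : ℝ} (hK : ∀ x, ‖fderiv ℝ f x‖ ≤ K)
    (x h : E) : ‖taylorRemainder f x h‖ ≤ 2 * K * ‖h‖ := by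
  have hderiv (y : E) : ‖fderiv ℝ f y - fderiv ℝ f x‖ ≤ 2 * K :=
    (norm_sub_le _ _).trans (by linarith [hK y, hK x])
  simpa only [taylorRemainder, add_sub_cancel_left] using
    convex_univ.norm_image_sub_le_of_norm_hasFDerivWithin_le'
      (fun y _ => (hf y).hasFDerivAt.hasFDerivWithinAt) (fun y _ => hderiv y)
      (Set.mem_univ x) (Set.mem_univ (x + h))

theorem norm_fderiv_sub_le (hf : ContDiff ℝ 2 f) {H : ℝ}
    (hH : ∀ x, ‖iteratedFDeriv ℝ 2 f x‖ ≤ H) (x y : E) :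
    ‖fderiv ℝ f y - fderiv ℝ f x‖ ≤ H * ‖y - x‖ := by
  have hdiff : Differentiable ℝ (fderiv ℝ f) :=
    (hf.fderiv_right (m := 1) (by norm_num)).differentiable one_ne_zero
  have hfderiv (z : E) : ‖fderiv ℝ (fderiv ℝ f) z‖ ≤ H := by
    rw [← norm_iteratedFDeriv_one, norm_iteratedFDeriv_fderiv]
    exact hH z
  exact convex_univ.norm_image_sub_le_of_norm_fderiv_le (fun z _ => hdiff z)
    (fun z _ => hfderiv z) (Set.mem_univ x) (Set.mem_univ y)

theorem norm_taylorRemainder_le_sq (hf : ContDiff ℝ 2 f) {H : ℝ}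
    (hH : ∀ x, ‖iteratedFDeriv ℝ 2 f x‖ ≤ H) (x h : E) :
    ‖taylorRemainder f x h‖ ≤ H * ‖h‖ ^ 2 := by
  have hH0 : 0 ≤ H := (norm_nonneg _).trans (hH x)
  have hderiv (y : E) (hy : y ∈ Metric.closedBall x ‖h‖) :
      ‖fderiv ℝ f y - fderiv ℝ f x‖ ≤ H * ‖h‖ :=
    (norm_fderiv_sub_le hf hH x y).trans (by gcongr; exact mem_closedBall_iff_norm.1 hy)
  simpa only [taylorRemainder, add_sub_cancel_left, sq, mul_assoc] using
    (convex_closedBall x ‖h‖).norm_image_sub_le_of_norm_hasFDerivWithin_le'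
      (fun y _ => (hf.differentiable two_ne_zero y).hasFDerivAt.hasFDerivWithinAt) hderiv
      (Metric.mem_closedBall_self (norm_nonneg h)) (by simp : x + h ∈ Metric.closedBall x ‖h‖)

end Taylor

section NonlocalOperator

open Set

theorem nonlocalOp_eq_stableConst_mul_integral {d : ℕ} (α : ℝ) (A : Matrix (Fin d) (Fin d) ℝ)
    (f : EuclideanSpace ℝ (Fin d) → ℝ) (x : EuclideanSpace ℝ (Fin d)) :
    nonlocalOp d α A f x =
      stableConst d α * ∫ z, taylorRemainder f x (Matrix.toEuclideanCLM (𝕜 := ℝ) A z) *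
        stableKernel α z := by
  simp only [nonlocalOp, stableKernel, finrank_euclideanSpace_fin]
  rfl

theorem div_add_div_le_mul_add {B B' x y P : ℝ} (hB : 0 ≤ B) (hB' : 0 ≤ B') (hx : x⁻¹ ≤ P)
    (hy : y⁻¹ ≤ P) : B / x + B' / y ≤ P * (B + B') :=
  calc B / x + B' / y = B * x⁻¹ + B' * y⁻¹ := by simp only [div_eq_mul_inv]
    _ ≤ B * P + B' * P := by gcongr
    _ = P * (B + B') := by ring

theorem exists_abs_integral_mul_stableKernel_bounds {a b : ℝ} (ha : 1 < a) (hb : b < 2) :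
    ∃ P > 0, ∀ d : ℕ, 1 ≤ d → ∀ g : EuclideanSpace ℝ (Fin d) → ℝ, AEStronglyMeasurable g →
      ∀ B ≥ 0, ∀ B' ≥ 0, (∀ z, |g z| ≤ B * ‖z‖) → (∀ z, |g z| ≤ B' * ‖z‖ ^ 2) →
      ∀ α ∈ Icc a b, |∫ z, g z * stableKernel α z| ≤ sphereArea d * (P * (B + B')) ∧
        ∀ ϑ ∈ Icc a b, |(∫ z, g z * stableKernel α z) - ∫ z, g z * stableKernel ϑ z| ≤
          sphereArea d * (P * (B + B')) * |α - ϑ| := by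
  have ha' : 0 < a - 1 := sub_pos.2 ha
  have hb' : 0 < 2 - b := sub_pos.2 hb
  let P : ℝ := max (max (a - 1)⁻¹ (2 - b)⁻¹) (max ((a - 1) ^ 2)⁻¹ ((2 - b) ^ 2)⁻¹)
  refine ⟨P, by positivity, fun d hd g hg B hB B' hB' hlin hsq α hα => ?_⟩
  have : Nonempty (Fin d) := ⟨⟨0, hd⟩⟩
  have hS := (sphereArea_pos hd).le
  have hlin' (z) : |g z| ≤ B * ‖z‖ ^ 1 := by simpa only [pow_one] using hlin z
  constructor
  · have hbound := abs_integral_mul_stableKernel_le hg hlin' hsq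
      (s := α) (by simpa using ha.trans_le hα.1) (by simpa using hα.2.trans_lt hb)
    rw [toSphere_real_univ_eq_sphereArea hd, Nat.cast_one, Nat.cast_ofNat] at hbound
    have hfar : (α - 1)⁻¹ ≤ P := (inv_anti₀ ha' (sub_le_sub_right hα.1 1)).trans (by simp [P])
    have hnear : (2 - α)⁻¹ ≤ P := (inv_anti₀ hb' (sub_le_sub_left hα.2 2)).trans (by simp [P])
    exact hbound.trans (by gcongr; exact div_add_div_le_mul_add hB hB' hfar hnear)
  · intro ϑ hϑ
    have hbound := abs_integral_mul_stableKernel_sub_le_of_mem_Icc hg hB hB' hlin' hsq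
      (by simpa using ha) (by simpa using hb) hα hϑ
    rw [toSphere_real_univ_eq_sphereArea hd, Nat.cast_one, Nat.cast_ofNat] at hbound
    refine hbound.trans ?_
    gcongr
    exact div_add_div_le_mul_add hB hB' (by simp [P]) (by simp [P])

theorem exists_abs_stableConst_mul_integral_sub_le {a b : ℝ} (ha : 1 < a) (hb : b < 2) :
    ∃ C > 0, ∀ d : ℕ, 1 ≤ d → ∀ g : EuclideanSpace ℝ (Fin d) → ℝ, AEStronglyMeasurable g →
      ∀ B ≥ 0, ∀ B' ≥ 0, (∀ z, |g z| ≤ B * ‖z‖) → (∀ z, |g z| ≤ B' * ‖z‖ ^ 2) →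
      ∀ α ∈ Icc a b, ∀ ϑ ∈ Icc a b,
        |stableConst d α * (∫ z, g z * stableKernel α z) -
          stableConst d ϑ * ∫ z, g z * stableKernel ϑ z| ≤ C * d * |α - ϑ| * (B + B') := by
  obtain ⟨L, hL, hconst⟩ := exists_stableConst_mul_sphereArea_bounds (one_pos.trans ha) hb
  obtain ⟨P, hP, hintegral⟩ := exists_abs_integral_mul_stableKernel_bounds ha hb
  refine ⟨2 * L * P, by positivity, fun d hd g hg B hB B' hB' hlin hsq α hα ϑ hϑ => ?_⟩
  specialize hintegral d hd g hg B hB B' hB' hlin hsq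
  set I : ℝ → ℝ := fun s => ∫ z, g z * stableKernel s z
  have hS := sphereArea_pos hd
  have hmean : |I α / sphereArea d| ≤ P * (B + B') := by
    rw [abs_div, abs_of_pos hS, div_le_iff₀' hS]
    exact (hintegral α hα).1
  have hmean_sub : |I α / sphereArea d - I ϑ / sphereArea d| ≤ P * (B + B') * |α - ϑ| := by
    rw [← sub_div, abs_div, abs_of_pos hS, div_le_iff₀' hS, ← mul_assoc]
    exact (hintegral α hα).2 ϑ hϑ
  have hbalance : ∀ s, stableConst d s * I s =
      stableConst d s * sphereArea d * (I s / sphereArea d) := fun s => by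
    rw [mul_assoc, mul_div_cancel₀ _ hS.ne']
  calc |stableConst d α * I α - stableConst d ϑ * I ϑ|
      ≤ (L * d * (P * (B + B')) + L * d * (P * (B + B'))) * |α - ϑ| := by
        rw [hbalance, hbalance]
        exact abs_mul_sub_mul_le (hconst d hd ϑ hϑ).1 hmean ((hconst d hd α hα).2 ϑ hϑ) hmean_sub
    _ = 2 * L * P * d * |α - ϑ| * (B + B') := by ring

theorem exists_abs_nonlocalOp_sub_le {a b : ℝ} (ha : 1 < a) (hb : b < 2) :
    ∃ C > 0, ∀ d : ℕ, 1 ≤ d → ∀ α ∈ Icc a b, ∀ ϑ ∈ Icc a b,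
      ∀ (A : Matrix (Fin d) (Fin d) ℝ) (f : EuclideanSpace ℝ (Fin d) → ℝ), ContDiff ℝ 2 f →
      ∀ K H : ℝ, (∀ x, ‖fderiv ℝ f x‖ ≤ K) → (∀ x, ‖iteratedFDeriv ℝ 2 f x‖ ≤ H) → ∀ x,
        |nonlocalOp d α A f x - nonlocalOp d ϑ A f x| ≤ C * d * |ϑ - α| *
          (‖Matrix.toEuclideanCLM (𝕜 := ℝ) A‖ * K +
            ‖Matrix.toEuclideanCLM (𝕜 := ℝ) A‖ ^ 2 * H) := by
  obtain ⟨C, hC, hcompare⟩ := exists_abs_stableConst_mul_integral_sub_le ha hb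
  refine ⟨2 * C, by positivity, fun d hd α hα ϑ hϑ A f hf K H hK hH x => ?_⟩
  set T := Matrix.toEuclideanCLM (𝕜 := ℝ) A
  have hK0 : 0 ≤ K := (norm_nonneg _).trans (hK x)
  have hH0 : 0 ≤ H := (norm_nonneg _).trans (hH x)
  have hmeas : AEStronglyMeasurable fun z => taylorRemainder f x (T z) :=
    ((continuous_taylorRemainder hf.continuous x).comp T.continuous).aestronglyMeasurable
  have hlin (z) : |taylorRemainder f x (T z)| ≤ 2 * K * ‖T‖ * ‖z‖ :=
    calc _ ≤ 2 * K * ‖T z‖ := norm_taylorRemainder_le (hf.differentiable two_ne_zero) hK x _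
      _ ≤ 2 * K * (‖T‖ * ‖z‖) := by gcongr; exact T.le_opNorm z
      _ = 2 * K * ‖T‖ * ‖z‖ := by ring
  have hsq (z) : |taylorRemainder f x (T z)| ≤ H * ‖T‖ ^ 2 * ‖z‖ ^ 2 :=
    calc _ ≤ H * ‖T z‖ ^ 2 := norm_taylorRemainder_le_sq hf hH x _
      _ ≤ H * (‖T‖ * ‖z‖) ^ 2 := by gcongr; exact T.le_opNorm z
      _ = H * ‖T‖ ^ 2 * ‖z‖ ^ 2 := by ring
  rw [nonlocalOp_eq_stableConst_mul_integral, nonlocalOp_eq_stableConst_mul_integral]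
  calc _ ≤ C * d * |α - ϑ| * (2 * K * ‖T‖ + H * ‖T‖ ^ 2) :=
        hcompare d hd _ hmeas _ (by positivity) _ (by positivity) hlin hsq α hα ϑ hϑ
    _ ≤ C * d * |α - ϑ| * (2 * (‖T‖ * K + ‖T‖ ^ 2 * H)) := by
      gcongr
      linarith [show 0 ≤ ‖T‖ ^ 2 * H by positivity]
    _ = 2 * C * d * |ϑ - α| * (‖T‖ * K + ‖T‖ ^ 2 * H) := by rw [abs_sub_comm]; ring

theorem stmt1_general {a b : ℝ} (ha : 1 < a) (hb : b < 2) (c K : ℝ) :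
    ∃ C > 0, ∀ d : ℕ, 1 ≤ d → ∀ α ∈ Icc a b, ∀ ϑ ∈ Icc a b, ∀ T ≥ 0,
      ∀ A : Matrix (Fin d) (Fin d) ℝ, ‖Matrix.toEuclideanCLM (𝕜 := ℝ) A‖ ≤ c →
      ∀ f : EuclideanSpace ℝ (Fin d) → ℝ, ContDiff ℝ 2 f → (∀ x, ‖fderiv ℝ f x‖ ≤ K * T) →
      (∀ x, ‖iteratedFDeriv ℝ 2 f x‖ ≤ K * T) → ∀ x,
        |nonlocalOp d α A f x - nonlocalOp d ϑ A f x| ≤ C * d * |ϑ - α| * T := by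
  obtain ⟨C, hC, hcompare⟩ := exists_abs_nonlocalOp_sub_le ha hb
  refine ⟨C * ((|c| + |c| ^ 2) * |K| + 1), by positivity, ?_⟩
  intro d hd α hα ϑ hϑ T hT A hA f hf hK hH x
  calc _ ≤ _ := hcompare d hd α hα ϑ hϑ A f hf (K * T) (K * T) hK hH x
    _ ≤ C * d * |ϑ - α| * (|c| * (|K| * T) + |c| ^ 2 * (|K| * T)) := by
      have hKT : 0 ≤ K * T := (norm_nonneg _).trans (hK x)
      have hAc := hA.trans (le_abs_self c)
      gcongr <;> exact le_abs_self K
    _ = C * ((|c| + |c| ^ 2) * |K|) * d * |ϑ - α| * T := by ring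
    _ ≤ C * ((|c| + |c| ^ 2) * |K| + 1) * d * |ϑ - α| * T := by
      gcongr
      exact le_add_of_nonneg_right zero_le_one

end NonlocalOperator

theorem stmt1 (α₀ ϑ₀ c₂ K : ℝ) (hα₀ : 1 < α₀) (hα₀ϑ₀ : α₀ < ϑ₀) (hϑ₀ : ϑ₀ < 2)
    (hc₂ : 1 ≤ c₂) :
    ∃ C > 0, ∀ (d : ℕ), 1 ≤ d → ∀ α ∈ Set.Icc α₀ ϑ₀, ∀ ϑ ∈ Set.Icc α₀ ϑ₀,
      ∀ t ∈ Set.Ioc (0 : ℝ) 1,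
      ∀ A : Matrix (Fin d) (Fin d) ℝ,
        (∀ z : EuclideanSpace ℝ (Fin d),
          ‖Matrix.toEuclideanLin A z‖ ≤ Real.sqrt c₂ * ‖z‖) →
      ∀ f : EuclideanSpace ℝ (Fin d) → ℝ, ContDiff ℝ 2 f →
        (∀ x, ‖fderiv ℝ f x‖ ≤ K) →
        (∀ x, ‖iteratedFDeriv ℝ 2 f x‖ ≤ K * t ^ (-α⁻¹)) →
      ∀ x : EuclideanSpace ℝ (Fin d),
        |nonlocalOp d α A f x - nonlocalOp d ϑ A f x|
          ≤ C * d * |ϑ - α| * t ^ (-α⁻¹) := by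
  obtain ⟨C, hC, hgeneral⟩ := stmt1_general hα₀ hϑ₀ (√c₂) K
  refine ⟨C, hC, fun d hd α hα ϑ hϑ t ht A hA f hf hK hH => ?_⟩
  have hT : 1 ≤ t ^ (-α⁻¹) := one_le_rpow_of_pos_of_le_one_of_nonpos ht.1 ht.2
    (neg_nonpos.2 (inv_nonneg.2 (by linarith [hα.1])))
  exact hgeneral d hd α hα ϑ hϑ _ (zero_le_one.trans hT) A
    (ContinuousLinearMap.opNorm_le_bound _ (sqrt_nonneg c₂) hA) f hf
    (fun y => (hK y).trans (le_mul_of_one_le_right ((norm_nonneg _).trans (hK y)) hT)) hH
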